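/- Suppose (u, s, θ) with u ∈ ℝ^M, s ∈ ℝ^M, θ ∈ ℝ^d satisfies: sᵢ - aᵢᵀθ + bᵢ ≥ 0, uᵢ(sᵢ - aᵢᵀθ + bᵢ) = 0, sᵢ(1 - uᵢ) = 0, 0 ≤ uᵢ ≤ 1, and sᵢ ≥ 0 for all i. Then for every index i with aᵢᵀθ - bᵢ > 0 we have uᵢ = 1. Consequently, Σᵢ uᵢ is at least the number of constraints violated by θ. -/

import Mathlib

theorem eq_one_of_mul_one_sub_eq_zero {R : Type*} [Ring R] [NoZeroDivisors R] {x y : R}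
    (hx : x ≠ 0) (h : x * (1 - y) = 0) : y = 1 :=
  (sub_eq_zero.mp ((mul_eq_zero.mp h).resolve_left hx)).symm

theorem ncard_le_sum_of_one_le {ι R : Type*} [Fintype ι] [AddCommMonoidWithOne R]
    [PartialOrder R] [IsOrderedAddMonoid R] {A : Set ι} {u : ι → R}
    (hu : ∀ i, 0 ≤ u i) (hA : ∀ i ∈ A, 1 ≤ u i) : (A.ncard : R) ≤ ∑ i, u i := by
  classical
  rw [Set.ncard_eq_toFinset_card', ← nsmul_one]
  calc A.toFinset.card • (1 : R)
      ≤ ∑ i ∈ A.toFinset, u i :=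
        Finset.card_nsmul_le_sum _ _ _ fun i hi ↦ hA i (Set.mem_toFinset.mp hi)
    _ ≤ ∑ i, u i := Finset.sum_le_univ_sum_of_nonneg hu

theorem relaxed_complementarity_lower_bound_general {ι R : Type*} [Fintype ι] [Ring R]
    [NoZeroDivisors R] [PartialOrder R] [IsOrderedAddMonoid R] {residual slack u : ι → R}
    (residual_le : ∀ i, residual i ≤ slack i) (complementary : ∀ i, slack i * (1 - u i) = 0)
    (u_nonneg : ∀ i, 0 ≤ u i) :
    (∀ i, 0 < residual i → u i = 1) ∧ ({i | 0 < residual i}.ncard : R) ≤ ∑ i, u i := by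
  have eq_one_of_violated : ∀ i, 0 < residual i → u i = 1 := fun i hi ↦
    eq_one_of_mul_one_sub_eq_zero (hi.trans_le (residual_le i)).ne' (complementary i)
  exact ⟨eq_one_of_violated,
    ncard_le_sum_of_one_le u_nonneg fun i hi ↦ (eq_one_of_violated i hi).ge⟩

open Finset in
theorem relaxed_complementarity_lower_bound
    (M d : ℕ) (a : Fin M → Fin d → ℝ) (b : Fin M → ℝ) (θ : Fin d → ℝ)
    (u s : Fin M → ℝ)
    (h1 : ∀ i, s i - (∑ k, a i k * θ k) + b i ≥ 0)
    (h2 : ∀ i, u i * (s i - (∑ k, a i k * θ k) + b i) = 0)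
    (h3 : ∀ i, s i * (1 - u i) = 0)
    (h4 : ∀ i, 0 ≤ u i ∧ u i ≤ 1)
    (h5 : ∀ i, s i ≥ 0) :
    (∀ i, (∑ k, a i k * θ k) - b i > 0 → u i = 1) ∧
    ({i : Fin M | (∑ k, a i k * θ k) - b i > 0}.ncard : ℝ) ≤ ∑ i, u i :=
  relaxed_complementarity_lower_bound_general (fun i ↦ by linarith [h1 i]) h3 fun i ↦ (h4 i).1
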